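/- Let d > 2 be an integer, J an admissible kernel on ℤ^d, and G ∈ 𝒢 with (J,G) satisfying Assumption G. Let 0 ≤ β' ≤ β < β_c. If E(β) ≤ max{ (1/4)·χ(β')/χ(β), (1/4)·(ξ(β')/ξ(β))² } and E(β) ≤ 1/2, then (1/2)·χ(β')/χ(β) ≤ (ξ(β')/ξ(β))² ≤ 2·χ(β')/χ(β). -/

import Mathlib

open scoped ENNReal

noncomputable section

namespace Blackbox

/-- Supremum norm of a lattice point. -/
def supNorm {d : ℕ} (x : Fin d → ℤ) : ℝ :=
  ((Finset.univ.sup fun i => (x i).natAbs : ℕ) : ℝ)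

/-- Squared Euclidean norm of a lattice point. -/
def sqNorm {d : ℕ} (x : Fin d → ℤ) : ℝ :=
  ∑ i, ((x i : ℝ)) ^ 2

/-- Invariance under coordinate permutations and sign flips of individual coordinates. -/
def IsSymmFun {d : ℕ} {α : Type*} (f : (Fin d → ℤ) → α) : Prop :=
  ∀ (π : Equiv.Perm (Fin d)) (e : Fin d → Bool) (x : Fin d → ℤ),
    f (fun i => (if e i then -1 else 1) * x (π i)) = f x

/-- First coordinate (dot product with `e₁`). -/
def e1 {d : ℕ} {α : Type*} [Zero α] (y : Fin d → α) : α :=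
  if h : 0 < d then y ⟨0, h⟩ else 0

/-- An admissible kernel on `ℤ^d` with constant `c₀`. -/
structure AdmissibleKernel (d : ℕ) (c₀ : ℝ) where
  J : (Fin d → ℤ) → ℝ
  nonneg : ∀ x, 0 ≤ J x
  zero_at_zero : J 0 = 0
  summable : Summable J
  norm_one : ∑' x, J x = 1
  symm : IsSymmFun J
  R : ℝ
  R_ge_one : 1 ≤ R
  range_le : ∀ x, 0 < J x → supNorm x ≤ R
  range_attained : ∃ x, 0 < J x ∧ supNorm x = R
  summable_sq : Summable fun x => sqNorm x * J x
  sigma_lower : c₀ * R ≤ Real.sqrt (∑' x, sqNorm x * J x)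
  J_upper : ∀ x, J x ≤ c₀⁻¹ / R ^ d

/-- `σ_J`, the square root of the variance of the kernel. -/
def AdmissibleKernel.sigma {d : ℕ} {c₀ : ℝ} (K : AdmissibleKernel d c₀) : ℝ :=
  Real.sqrt (∑' x, sqNorm x * K.J x)

/-- A family `G ∈ 𝒢` together with an admissible kernel `J` such that `(J,G)` satisfies
Assumption G (with error-term family `H`). -/
structure Model (d : ℕ) (c₀ : ℝ) where
  K : AdmissibleKernel d c₀
  G : ℝ → (Fin d → ℤ) → ℝ≥0∞
  βc : ℝ≥0∞
  βc_pos : 0 < βc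
  init : ∀ x, G 0 x = if x = 0 then 1 else 0
  G' : ℝ → (Fin d → ℤ) → ℝ
  mono : ∀ (x : Fin d → ℤ) ⦃β₁ β₂ : ℝ⦄, 0 ≤ β₁ → β₁ ≤ β₂ →
    ENNReal.ofReal β₂ ≤ βc → G β₁ x ≤ G β₂ x
  deriv : ∀ (x : Fin d → ℤ) ⦃β : ℝ⦄, 0 ≤ β → ENNReal.ofReal β < βc →
    HasDerivWithinAt (fun t => (G t x).toReal) (G' β x) (Set.Ici 0) β
  symm : ∀ β, IsSymmFun (G β)
  expDecay : ∀ ⦃β : ℝ⦄, 0 ≤ β → ENNReal.ofReal β < βc →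
    ∃ C > (0:ℝ), ∃ c > (0:ℝ), ∀ x, G β x ≤ ENNReal.ofReal (C * Real.exp (-c * supNorm x))
  limit : βc ≠ ⊤ → ∀ x, G βc.toReal x = ⨆ β ∈ Set.Ico (0 : ℝ) βc.toReal, G β x
  I1 : ∀ ⦃β' β : ℝ⦄, 0 ≤ β' → β' ≤ β → ENNReal.ofReal β < βc →
    ∀ x, G β x ≤ G β' x + ENNReal.ofReal (β - β') *
      ∑' p : (Fin d → ℤ) × (Fin d → ℤ),
        G β' p.1 * ENNReal.ofReal (K.J p.2) * G β (x - p.1 - p.2)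
  H : ℝ → (Fin d → ℤ) → ℝ
  H_nonneg : ∀ β x, 0 ≤ H β x
  H_zero : ∀ x, H 0 x = 0
  H_symm : ∀ β x, H β (-x) = H β x
  H_cont : ∀ x, ContinuousOn (fun β => H β x)
    {β : ℝ | 0 ≤ β ∧ ENNReal.ofReal β < βc}
  H_expDecay : ∀ ⦃β : ℝ⦄, 0 ≤ β → ENNReal.ofReal β < βc →
    ∃ C > (0:ℝ), ∃ c > (0:ℝ), ∀ x, H β x ≤ C * Real.exp (-c * supNorm x)
  I2 : ∀ ⦃β : ℝ⦄, 0 ≤ β → ENNReal.ofReal β < βc → ∀ x,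
    (∑' p : (Fin d → ℤ) × (Fin d → ℤ),
      (G β p.1).toReal * (K.J p.2 - H β p.2) * (G β (x - p.1 - p.2)).toReal)
      ≤ G' β x

namespace Model

variable {d : ℕ} {c₀ : ℝ}

def sigma (M : Model d c₀) : ℝ := M.K.sigma

/-- `F_β = J * G_β`. -/
def F (M : Model d c₀) (β : ℝ) (x : Fin d → ℤ) : ℝ≥0∞ :=
  ∑' y, ENNReal.ofReal (M.K.J y) * M.G β (x - y)

/-- The susceptibility `χ(β)`. -/
def chi (M : Model d c₀) (β : ℝ) : ℝ≥0∞ := ∑' x, M.G β x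

/-- `ξ(β)²`. -/
def xiSq (M : Model d c₀) (β : ℝ) : ℝ≥0∞ :=
  (∑' x, ENNReal.ofReal (sqNorm x) * M.F β x) / M.chi β

/-- The correlation length of order two, `ξ(β)`. -/
def xi (M : Model d c₀) (β : ℝ) : ℝ := Real.sqrt (M.xiSq β).toReal

/-- The error term `E(β)`. -/
def E (M : Model d c₀) (β : ℝ) : ℝ≥0∞ :=
  ⨆ t ∈ Set.Icc (0 : ℝ) β,
    (ENNReal.ofReal (∑' x, M.H t x) +
      ENNReal.ofReal (∑' x, sqNorm x * M.H t x) / M.xiSq t)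

/-- `β(δ)`. -/
def betaOf (M : Model d c₀) (δ : ℝ) : ℝ :=
  sSup {β : ℝ | 0 ≤ β ∧ ENNReal.ofReal β < M.βc ∧ M.E β < ENNReal.ofReal δ}

/-- One-step distribution of the effective random walk at parameter `β`. -/
def effStep (M : Model d c₀) (β : ℝ) (y : Fin d → ℤ) : ℝ≥0∞ :=
  M.F β y / M.chi β

/-- `k`-step distribution of the effective random walk at parameter `β`. -/
def effIter (M : Model d c₀) (β : ℝ) : ℕ → (Fin d → ℤ) → ℝ≥0∞
  | 0 => fun x => if x = 0 then 1 else 0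
  | n + 1 => fun x => ∑' y, M.effStep β y * M.effIter β n (x - y)

/-- Moment generating function `M_β(s)` of the first coordinate of one step of the
effective random walk. -/
def Mgf (M : Model d c₀) (β s : ℝ) : ℝ≥0∞ :=
  ∑' y : Fin d → ℤ, M.effStep β y * ENNReal.ofReal (Real.exp (s / M.xi β * ((e1 y : ℤ) : ℝ)))

end Model

end Blackbox
open Blackbox

/-!
Write `X = χ` and `S = ∑ |x|² F(x) = ξ² χ`; the latter is the sum of `G` against the weight
`|x|² + σ_J²`. Summing (I.1) and (I.2) against the weights `1` and `|x|² + σ_J²`, where the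
parallelogram law removes the cross terms because all functions involved are even, shows that the
right Dini derivatives of `log X` lie between `(1 - E) X` and `X`, and those of `log S` between
`2 (1 - E) X` and `2 X`. Both are thus comparable to `∫ X`, so between `β'` and `β` the increments
satisfy `2 (1 - E) Δ log X ≤ Δ log S` and `(1 - E) Δ log S ≤ 2 Δ log X`. Hence
`Δ log ξ² = Δ log S - Δ log X` differs from `Δ log X` by at most a multiple of `E Δ log X`. By
hypothesis `E` is at most a quarter of the exponential of `-Δ log X` or of `-Δ log ξ²`, so
`t exp (-t) ≤ exp (-1)` bounds the difference by `log 2`.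
-/

namespace Blackbox

open Filter Topology Set
open scoped NNReal

section Dini

/-- The lower right Dini derivative of `f` at `t` is at least `c`. An upper bound on the upper right
Dini derivative of `f` is expressed by applying this to `-f`. -/
def RightDiniGE (f : ℝ → ℝ) (c t : ℝ) : Prop :=
  ∀ r < c, ∀ᶠ s in 𝓝[>] t, r * (s - t) ≤ f s - f t

namespace RightDiniGE

variable {f g : ℝ → ℝ} {c e k t : ℝ}

theorem of_eventually_sub_le_sub (hg : RightDiniGE g c t)
    (h : ∀ᶠ s in 𝓝[>] t, g s - g t ≤ f s - f t) : RightDiniGE f c t := fun r hr => by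
  filter_upwards [hg r hr, h] with s h₁ h₂ using h₁.trans h₂

theorem mono (hf : RightDiniGE f c t) (h : e ≤ c) : RightDiniGE f e t := fun r hr =>
  hf r (hr.trans_le h)

theorem of_eventually_mul_le {q : ℝ → ℝ} (hq : Tendsto q (𝓝[>] t) (𝓝 c))
    (h : ∀ᶠ s in 𝓝[>] t, q s * (s - t) ≤ f s - f t) : RightDiniGE f c t := fun r hr => by
  filter_upwards [hq.eventually_const_lt hr, h, self_mem_nhdsWithin] with s hrs hs hts
  exact (mul_le_mul_of_nonneg_right hrs.le (sub_nonneg.2 (le_of_lt hts))).trans hs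

theorem of_hasDerivWithinAt (hf : HasDerivWithinAt f c (Ioi t) t) : RightDiniGE f c t := by
  refine of_eventually_mul_le
    ((hasDerivWithinAt_iff_tendsto_slope' self_notMem_Ioi).1 hf) ?_
  filter_upwards with s
  rw [mul_comm, ← smul_eq_mul, sub_smul_slope, vsub_eq_sub]

theorem add (hf : RightDiniGE f c t) (hg : RightDiniGE g e t) :
    RightDiniGE (fun s => f s + g s) (c + e) t := fun r hr => by
  filter_upwards [hf (c - (c + e - r) / 2) (by linarith), hg (e - (c + e - r) / 2) (by linarith)]
    with s hfs hgs
  linarith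

/-- Chain rule. The factor `dslope φ (f t) (f s)` relating the increments of `φ ∘ f` and `f` is
positive near `t`, so that lower bounds are preserved. -/
theorem comp {φ : ℝ → ℝ} (hφ : HasDerivAt φ k (f t)) (hk : 0 < k) (hf : RightDiniGE f c t)
    (hcont : ContinuousWithinAt f (Ioi t) t) : RightDiniGE (fun s => φ (f s)) (k * c) t := by
  intro r hr
  obtain ⟨r', hrr', hr'c⟩ := exists_between ((div_lt_iff₀' hk).2 hr)
  have hslope : Tendsto (fun s => dslope φ (f t) (f s)) (𝓝[>] t) (𝓝 k) := by
    have := (continuousAt_dslope_same.2 hφ.differentiableAt).tendsto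
    rw [dslope_same, hφ.deriv] at this
    exact this.comp hcont
  filter_upwards [hf r' hr'c, hslope.eventually_const_lt hk,
    (hslope.mul_const r').eventually_const_lt ((div_lt_iff₀' hk).1 hrr'), self_mem_nhdsWithin]
    with s hfs hpos hlt hts
  calc r * (s - t) ≤ dslope φ (f t) (f s) * r' * (s - t) :=
        mul_le_mul_of_nonneg_right hlt.le (sub_nonneg.2 (le_of_lt hts))
    _ = dslope φ (f t) (f s) * (r' * (s - t)) := mul_assoc ..
    _ ≤ dslope φ (f t) (f s) * (f s - f t) := mul_le_mul_of_nonneg_left hfs hpos.le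
    _ = φ (f s) - φ (f t) := by rw [mul_comm, ← smul_eq_mul, sub_smul_dslope]

theorem const_mul (hf : RightDiniGE f c t) (hk : 0 < k) :
    RightDiniGE (fun s => k * f s) (k * c) t := fun r hr => by
  filter_upwards [hf (r / k) ((div_lt_iff₀' hk).2 hr)] with s hs
  calc r * (s - t) = k * (r / k * (s - t)) := by field_simp
    _ ≤ k * (f s - f t) := mul_le_mul_of_nonneg_left hs hk.le
    _ = k * f s - k * f t := mul_sub ..

theorem log (hf : RightDiniGE f c t) (hcont : ContinuousWithinAt f (Ioi t) t) (hpos : 0 < f t) :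
    RightDiniGE (fun s => Real.log (f s)) (c / f t) t := by
  rw [div_eq_inv_mul]
  exact hf.comp (Real.hasDerivAt_log hpos.ne') (inv_pos.2 hpos) hcont

theorem neg_log (hf : RightDiniGE (fun s => -f s) (-c) t)
    (hcont : ContinuousWithinAt f (Ioi t) t) (hpos : 0 < f t) :
    RightDiniGE (fun s => -Real.log (f s)) (-(c / f t)) t := by
  have hderiv : HasDerivAt (fun y => -Real.log y) (f t)⁻¹ (-f t) := by
    simpa only [inv_neg, neg_neg] using (Real.hasDerivAt_log (neg_ne_zero.2 hpos.ne')).fun_neg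
  have := hf.comp (φ := fun y => -Real.log y) (f := fun s => -f s) hderiv (inv_pos.2 hpos)
    hcont.fun_neg
  simpa only [Real.log_neg_eq_log, mul_neg, ← div_eq_inv_mul] using this

end RightDiniGE

theorem le_of_rightDiniGE_zero {f : ℝ → ℝ} {a b : ℝ} (hab : a ≤ b)
    (hf : ContinuousOn f (Icc a b)) (h : ∀ t ∈ Ico a b, RightDiniGE f 0 t) : f a ≤ f b := by
  refine neg_le_neg_iff.1 (image_le_of_liminf_slope_right_le_deriv_boundary hf.fun_neg
    (B := fun _ => -f a) (B' := fun _ => 0) le_rfl continuousOn_const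
    (fun _ _ => hasDerivWithinAt_const _ _ _) (fun t ht r hr => ?_) (right_mem_Icc.2 hab))
  refine Eventually.frequently ?_
  filter_upwards [h t ht (-(r / 2)) (by linarith), self_mem_nhdsWithin] with s hs hts
  have hpos : 0 < s - t := sub_pos.2 hts
  rw [slope_def_field, div_lt_iff₀ hpos]
  nlinarith

theorem mul_sub_le_mul_sub_of_rightDiniGE {u v m : ℝ → ℝ} {a b p q : ℝ} (hab : a ≤ b)
    (hp : 0 < p) (hq : 0 < q) (hu : ContinuousOn u (Icc a b)) (hv : ContinuousOn v (Icc a b))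
    (hu' : ∀ t ∈ Ico a b, RightDiniGE u (p * m t) t)
    (hv' : ∀ t ∈ Ico a b, RightDiniGE (fun s => -v s) (-(q * m t)) t) :
    p * (v b - v a) ≤ q * (u b - u a) := by
  have := le_of_rightDiniGE_zero (f := fun s => q * u s + p * -v s) hab
    ((hu.const_mul q).add (hv.neg.const_mul p)) fun t ht => by
      simpa only [show q * (p * m t) + p * -(q * m t) = 0 by ring] using
        ((hu' t ht).const_mul hq).add ((hv' t ht).const_mul hp)
  linarith

theorem continuousOn_of_monotoneOn_of_sub_le_mul {f : ℝ → ℝ} {a b L : ℝ}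
    (hmono : MonotoneOn f (Icc a b))
    (h : ∀ s ∈ Icc a b, ∀ t ∈ Icc a b, s ≤ t → f t - f s ≤ (t - s) * L) :
    ContinuousOn f (Icc a b) := by
  refine (LipschitzOnWith.of_le_add_mul L.toNNReal fun x hx y hy => ?_).continuousOn
  rcases le_total x y with hxy | hyx
  · exact (hmono hx hy hxy).trans (le_add_of_nonneg_right (by positivity))
  · rw [Real.dist_eq, abs_of_nonneg (sub_nonneg.2 hyx)]
    have := mul_le_mul_of_nonneg_left (Real.le_coe_toNNReal L) (sub_nonneg.2 hyx)
    linarith [h y hy x hx hyx]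

end Dini

section Convolution

variable {A : Type*} [AddGroup A]

/-- The convolution of two nonnegative functions on a discrete group, with values in `ℝ≥0∞` so that
no summability is required. -/
def conv (f g : A → ℝ≥0∞) (x : A) : ℝ≥0∞ :=
  ∑' y, f y * g (x - y)

theorem tsum_prod_eq_conv_conv (f g h : A → ℝ≥0∞) (x : A) :
    ∑' p : A × A, f p.1 * g p.2 * h (x - p.1 - p.2) = conv f (conv g h) x := by
  simp_rw [conv, ENNReal.tsum_prod', mul_assoc, ENNReal.tsum_mul_left]

theorem tsum_mul_conv (w f g : A → ℝ≥0∞) :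
    ∑' x, w x * conv f g x = ∑' y, ∑' z, w (z + y) * (f y * g z) := by
  simp_rw [conv, ← ENNReal.tsum_mul_left]
  rw [ENNReal.tsum_comm]
  refine tsum_congr fun y => ?_
  rw [← (Equiv.addRight y).tsum_eq]
  simp only [Equiv.coe_addRight, add_sub_cancel_right]

theorem tsum_conv (f g : A → ℝ≥0∞) : ∑' x, conv f g x = (∑' x, f x) * ∑' x, g x := by
  have h := tsum_mul_conv 1 f g
  simpa only [Pi.one_apply, one_mul, ENNReal.tsum_mul_left, ENNReal.tsum_mul_right] using h

end Convolution

section SquareNorm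

variable {d : ℕ}

theorem sqNorm_nonneg (x : Fin d → ℤ) : 0 ≤ sqNorm x :=
  Finset.sum_nonneg fun _ _ => sq_nonneg _

theorem sqNorm_add_add_sqNorm_sub (x y : Fin d → ℤ) :
    sqNorm (x + y) + sqNorm (x - y) = 2 * (sqNorm x + sqNorm y) := by
  simp_rw [sqNorm, ← Finset.sum_add_distrib, Finset.mul_sum, Pi.add_apply, Pi.sub_apply,
    Int.cast_add, Int.cast_sub]
  exact Finset.sum_congr rfl fun i _ => by ring

theorem one_le_sqNorm {x : Fin d → ℤ} (hx : x ≠ 0) : 1 ≤ sqNorm x := by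
  obtain ⟨i, hi⟩ := Function.ne_iff.1 hx
  have hi' : (1 : ℤ) ≤ x i ^ 2 := Order.one_le_iff_pos.2 (sq_pos_of_ne_zero hi)
  calc (1 : ℝ) ≤ (x i : ℝ) ^ 2 := by exact_mod_cast hi'
    _ ≤ sqNorm x := Finset.single_le_sum (f := fun j => (x j : ℝ) ^ 2) (fun _ _ => sq_nonneg _)
      (Finset.mem_univ i)

theorem IsSymmFun.even {α : Type*} {f : (Fin d → ℤ) → α} (hf : IsSymmFun f) : f.Even :=
  fun x => by
    simpa only [if_true, neg_one_mul, Equiv.Perm.one_apply, Pi.neg_def] using hf 1 (fun _ => true) x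

/-- The second moment of a nonnegative function on `ℤ^d`. -/
def sqMoment (f : (Fin d → ℤ) → ℝ≥0∞) : ℝ≥0∞ :=
  ∑' x, ENNReal.ofReal (sqNorm x) * f x

theorem tsum_ofReal_sqNorm_add_mul (k : ℝ≥0∞) (f : (Fin d → ℤ) → ℝ≥0∞) :
    ∑' x, (ENNReal.ofReal (sqNorm x) + k) * f x = sqMoment f + k * ∑' x, f x := by
  simp_rw [add_mul, ENNReal.tsum_add, ENNReal.tsum_mul_left, sqMoment]

/-- Averaging over `y` and `-y`, the parallelogram law makes the cross terms cancel. -/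
theorem sqMoment_conv {f : (Fin d → ℤ) → ℝ≥0∞} (hf : f.Even) (g : (Fin d → ℤ) → ℝ≥0∞) :
    sqMoment (conv f g) = sqMoment f * ∑' x, g x + (∑' x, f x) * sqMoment g := by
  set q : (Fin d → ℤ) → ℝ≥0∞ := fun x => ENNReal.ofReal (sqNorm x)
  have hq (y z) : q (z + y) + q (z - y) = 2 * (q z + q y) := by
    simp only [q, ← ENNReal.ofReal_add, sqNorm_nonneg, sqNorm_add_add_sqNorm_sub,
      ENNReal.ofReal_mul two_pos.le, ENNReal.ofReal_ofNat]
  have hadd : sqMoment (conv f g) = ∑' y, ∑' z, q (z + y) * (f y * g z) := tsum_mul_conv q f g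
  have hsub : sqMoment (conv f g) = ∑' y, ∑' z, q (z - y) * (f y * g z) := by
    rw [hadd, ← (Equiv.neg (Fin d → ℤ)).tsum_eq]
    simp only [Equiv.neg_apply, hf _, sub_eq_add_neg]
  refine (ENNReal.mul_right_inj two_ne_zero ENNReal.ofNat_ne_top).1 ?_
  calc 2 * sqMoment (conv f g)
      = ∑' y, ∑' z, 2 * (q z + q y) * (f y * g z) := by
        rw [two_mul]
        nth_rw 1 [hadd]
        simp_rw [hsub, ← ENNReal.tsum_add, ← add_mul, hq]
    _ = ∑' y, ∑' z, (2 * (f y * (q z * g z)) + 2 * (q y * f y * g z)) :=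
        tsum_congr fun y => tsum_congr fun z => by ring
    _ = 2 * (sqMoment f * ∑' x, g x + (∑' x, f x) * sqMoment g) := by
        simp_rw [ENNReal.tsum_add, ENNReal.tsum_mul_left, ENNReal.tsum_mul_right, sqMoment]
        ring

end SquareNorm

section ExpDecay

variable {d : ℕ}

theorem tsum_pi_prod {α : Type*} (f : α → ℝ≥0∞) (n : ℕ) :
    ∑' x : Fin n → α, ∏ i, f (x i) = (∑' a, f a) ^ n := by
  induction n with
  | zero => simp only [Finset.univ_eq_empty, Finset.prod_empty, tsum_fintype, Finset.sum_const,
      Finset.card_univ, Fintype.card_unique, one_smul, pow_zero]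
  | succ n ih =>
    rw [← (Fin.consEquiv fun _ : Fin (n + 1) => α).tsum_eq, ENNReal.tsum_prod', pow_succ', ← ih]
    simp only [Fin.consEquiv_apply, Fin.prod_univ_succ, Fin.cons_zero, Fin.cons_succ,
      ENNReal.tsum_mul_left, ENNReal.tsum_mul_right]

theorem summable_of_tsum_ofReal_ne_top {α : Type*} {f : α → ℝ} (hf : ∀ a, 0 ≤ f a)
    (h : ∑' a, ENNReal.ofReal (f a) ≠ ∞) : Summable f := by
  simpa only [ENNReal.toReal_ofReal (hf _)] using ENNReal.summable_toReal h

theorem supNorm_nonneg (x : Fin d → ℤ) : 0 ≤ supNorm x :=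
  Nat.cast_nonneg _

theorem abs_coe_le_supNorm (x : Fin d → ℤ) (i : Fin d) : |(x i : ℝ)| ≤ supNorm x := by
  rw [← Int.cast_abs, ← Nat.cast_natAbs, supNorm]
  exact_mod_cast Finset.le_sup (f := fun i => (x i).natAbs) (Finset.mem_univ i)

theorem sum_abs_le_mul_supNorm (x : Fin d → ℤ) : ∑ i, |(x i : ℝ)| ≤ d * supNorm x := by
  simpa using Finset.sum_le_card_nsmul Finset.univ _ _ fun i _ => abs_coe_le_supNorm x i

theorem sqNorm_le_mul_supNorm_sq (x : Fin d → ℤ) : sqNorm x ≤ d * supNorm x ^ 2 := by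
  simpa [sqNorm] using Finset.sum_le_card_nsmul Finset.univ (fun i => (x i : ℝ) ^ 2) _ fun i _ =>
    sq_le_sq' (neg_le_of_abs_le (abs_coe_le_supNorm x i)) (le_of_abs_le (abs_coe_le_supNorm x i))

/-- Exponential decay of a nonnegative function on `ℤ^d` at some rate. -/
def HasExpDecay (f : (Fin d → ℤ) → ℝ≥0∞) : Prop :=
  ∃ C > (0 : ℝ), ∃ c > (0 : ℝ), ∀ x, f x ≤ ENNReal.ofReal (C * Real.exp (-c * supNorm x))

theorem summable_int_exp_neg_mul_abs {c : ℝ} (hc : 0 < c) :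
    Summable fun k : ℤ => Real.exp (-c * |(k : ℝ)|) := by
  have h : Summable fun n : ℕ => Real.exp (-c * n) := by
    simpa only [mul_comm] using Real.summable_exp_nat_mul_iff.2 (neg_neg_of_pos hc)
  exact Summable.of_nat_of_neg (by simpa using h) (by simpa using h)

theorem tsum_ofReal_exp_neg_mul_supNorm_ne_top {c : ℝ} (hc : 0 < c) :
    ∑' x : Fin d → ℤ, ENNReal.ofReal (Real.exp (-c * supNorm x)) ≠ ∞ := by
  have hc' : 0 < c / (d + 1) := by positivity
  have hle (x : Fin d → ℤ) : ENNReal.ofReal (Real.exp (-c * supNorm x)) ≤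
      ∏ i, ENNReal.ofReal (Real.exp (-(c / (d + 1)) * |(x i : ℝ)|)) := by
    rw [← ENNReal.ofReal_prod_of_nonneg fun _ _ => (Real.exp_pos _).le, ← Real.exp_sum,
      ← Finset.mul_sum]
    refine ENNReal.ofReal_le_ofReal (Real.exp_le_exp.2 ?_)
    rw [neg_mul, neg_mul, neg_le_neg_iff]
    calc c / (d + 1) * ∑ i, |(x i : ℝ)| ≤ c / (d + 1) * ((d + 1) * supNorm x) := by
          gcongr
          linarith [sum_abs_le_mul_supNorm x, supNorm_nonneg x]
      _ = c * supNorm x := by field_simp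
  refine ne_top_of_le_ne_top ?_ (ENNReal.tsum_le_tsum hle)
  rw [tsum_pi_prod fun k : ℤ => ENNReal.ofReal (Real.exp (-(c / (d + 1)) * |(k : ℝ)|))]
  exact ENNReal.pow_ne_top (summable_int_exp_neg_mul_abs hc').tsum_ofReal_ne_top

namespace HasExpDecay

variable {f : (Fin d → ℤ) → ℝ≥0∞}

theorem tsum_ne_top (hf : HasExpDecay f) : ∑' x, f x ≠ ∞ := by
  obtain ⟨C, hC, c, hc, hf⟩ := hf
  refine ne_top_of_le_ne_top ?_ (ENNReal.tsum_le_tsum hf)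
  simp_rw [ENNReal.ofReal_mul hC.le, ENNReal.tsum_mul_left]
  exact ENNReal.mul_ne_top ENNReal.ofReal_ne_top (tsum_ofReal_exp_neg_mul_supNorm_ne_top hc)

theorem ofReal_sqNorm_mul (hf : HasExpDecay f) :
    HasExpDecay fun x => ENNReal.ofReal (sqNorm x) * f x := by
  obtain ⟨C, hC, c, hc, hf⟩ := hf
  refine ⟨(d + 1) * (2 / (c / 2) ^ 2) * C, by positivity, c / 2, by positivity, fun x => ?_⟩
  have hsq : sqNorm x ≤ (d + 1) * (2 / (c / 2) ^ 2) * Real.exp (c / 2 * supNorm x) := by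
    have hexp := Real.pow_div_factorial_le_exp (c / 2 * supNorm x)
      (mul_nonneg (half_pos hc).le (supNorm_nonneg x)) 2
    calc sqNorm x ≤ (d + 1) * supNorm x ^ 2 := by
          linarith [sqNorm_le_mul_supNorm_sq x, sq_nonneg (supNorm x)]
      _ = (d + 1) * (2 / (c / 2) ^ 2) * ((c / 2 * supNorm x) ^ 2 / Nat.factorial 2) := by
          rw [Nat.factorial_two]
          field_simp
          norm_num
      _ ≤ (d + 1) * (2 / (c / 2) ^ 2) * Real.exp (c / 2 * supNorm x) := by gcongr
  calc ENNReal.ofReal (sqNorm x) * f x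
      ≤ ENNReal.ofReal (sqNorm x * (C * Real.exp (-c * supNorm x))) := by
        rw [ENNReal.ofReal_mul (sqNorm_nonneg x)]
        gcongr
        exact hf x
    _ ≤ ENNReal.ofReal ((d + 1) * (2 / (c / 2) ^ 2) * Real.exp (c / 2 * supNorm x) *
          (C * Real.exp (-c * supNorm x))) := by gcongr
    _ = ENNReal.ofReal ((d + 1) * (2 / (c / 2) ^ 2) * C * Real.exp (-(c / 2) * supNorm x)) := by
        rw [show -(c / 2) * supNorm x = c / 2 * supNorm x + -c * supNorm x by ring, Real.exp_add]
        congr 1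
        ring

theorem sqMoment_ne_top (hf : HasExpDecay f) : sqMoment f ≠ ∞ :=
  hf.ofReal_sqNorm_mul.tsum_ne_top

end HasExpDecay

end ExpDecay

section Numerics

variable {ε x y : ℝ}

theorem abs_sub_le_log_two (hx : 0 ≤ x) (hε₀ : 0 ≤ ε) (hε : ε ≤ 1 / 2)
    (hlower : 2 * (1 - ε) * x ≤ x + y) (hupper : (1 - ε) * (x + y) ≤ 2 * x)
    (hmax : ε ≤ max (Real.exp (-x) / 4) (Real.exp (-y) / 4)) : |x - y| ≤ Real.log 2 := by
  have hy : 0 ≤ y := by nlinarith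
  have hε' : ε ≤ 1 / 4 := by
    refine hmax.trans (max_le ?_ ?_) <;> gcongr <;> exact Real.exp_le_one_iff.2 (by linarith)
  have hxy : x ≤ 2 * y := by nlinarith
  have hεx : ε * x ≤ Real.exp (-1) / 2 := by
    rcases le_max_iff.1 hmax with h | h
    · linarith [mul_le_mul_of_nonneg_right h hx, Real.mul_exp_neg_le_exp_neg_one x,
        Real.exp_pos (-1)]
    · linarith [mul_le_mul_of_nonneg_left hxy hε₀, mul_le_mul_of_nonneg_right h hy,
        Real.mul_exp_neg_le_exp_neg_one y]
  have hdiff : |x - y| ≤ 8 / 3 * (ε * x) := by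
    rw [abs_le]
    constructor <;> nlinarith
  linarith [Real.exp_neg_one_lt_d9, Real.log_two_gt_d9]

theorem ofReal_exp_neg_le_two_mul (h : y - x ≤ Real.log 2) :
    ENNReal.ofReal (Real.exp (-x)) ≤ 2 * ENNReal.ofReal (Real.exp (-y)) := by
  rw [← ENNReal.ofReal_ofNat 2, ← ENNReal.ofReal_mul two_pos.le]
  refine ENNReal.ofReal_le_ofReal ?_
  rw [← Real.exp_log two_pos, ← Real.exp_add]
  exact Real.exp_le_exp.2 (by linarith)

theorem toReal_le_max_of_le_max {e : ℝ≥0∞} {a b : ℝ} (ha : 0 ≤ a)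
    (h : e ≤ max (ENNReal.ofReal a / 4) (ENNReal.ofReal b / 4)) :
    e.toReal ≤ max (a / 4) (b / 4) := by
  have hdiv (r : ℝ) : ENNReal.ofReal r / 4 = ENNReal.ofReal (r / 4) := by
    rw [ENNReal.ofReal_div_of_pos four_pos, ENNReal.ofReal_ofNat]
  rw [hdiv, hdiv, ← ENNReal.ofReal_max] at h
  exact ENNReal.toReal_le_of_le_ofReal (le_max_of_le_left (by positivity)) h

end Numerics

namespace Model

variable {d : ℕ} {c₀ β s t : ℝ} {M : Model d c₀}

/-- The parameters in `[0, β_c)`. -/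
def subcritical (M : Model d c₀) : Set ℝ :=
  {t | 0 ≤ t ∧ ENNReal.ofReal t < M.βc}

theorem Icc_subset_subcritical (hβ : β ∈ M.subcritical) : Icc 0 β ⊆ M.subcritical := fun _ ht =>
  ⟨ht.1, (ENNReal.ofReal_le_ofReal ht.2).trans_lt hβ.2⟩

theorem eventually_mem_subcritical (ht : t ∈ M.subcritical) :
    ∀ᶠ s in 𝓝[>] t, s ∈ M.subcritical := by
  filter_upwards [self_mem_nhdsWithin, nhdsWithin_le_nhds
    (ENNReal.continuous_ofReal.continuousAt.eventually_lt_const ht.2)] with s hts hs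
  exact ⟨ht.1.trans (le_of_lt hts), hs⟩

/-- The step distribution `J`, with values in `ℝ≥0∞`. -/
def kernel (M : Model d c₀) (x : Fin d → ℤ) : ℝ≥0∞ :=
  ENNReal.ofReal (M.K.J x)

theorem even_kernel : M.kernel.Even := fun x =>
  congrArg ENNReal.ofReal (M.K.symm.even x)

theorem tsum_kernel : ∑' x, M.kernel x = 1 := by
  simp_rw [kernel]
  rw [← ENNReal.ofReal_tsum_of_nonneg M.K.nonneg M.K.summable, M.K.norm_one, ENNReal.ofReal_one]

theorem sqMoment_kernel_ne_top : sqMoment M.kernel ≠ ∞ := by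
  simp_rw [sqMoment, kernel, ← ENNReal.ofReal_mul (sqNorm_nonneg _)]
  exact M.K.summable_sq.tsum_ofReal_ne_top

theorem one_le_sqMoment_kernel : 1 ≤ sqMoment M.kernel := by
  rw [← M.tsum_kernel]
  refine ENNReal.tsum_le_tsum fun x => ?_
  rcases eq_or_ne x 0 with rfl | hx
  · simp only [kernel, M.K.zero_at_zero, ENNReal.ofReal_zero, zero_le]
  · exact le_mul_of_one_le_left' (ENNReal.one_le_ofReal.2 (one_le_sqNorm hx))

theorem even_G : (M.G t).Even :=
  (M.symm t).even

theorem chi_ne_top (ht : t ∈ M.subcritical) : M.chi t ≠ ∞ :=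
  HasExpDecay.tsum_ne_top (M.expDecay ht.1 ht.2)

theorem sqMoment_G_ne_top (ht : t ∈ M.subcritical) : sqMoment (M.G t) ≠ ∞ :=
  HasExpDecay.sqMoment_ne_top (M.expDecay ht.1 ht.2)

/-- The error function `H_t`, with values in `ℝ≥0∞`. -/
def error (M : Model d c₀) (t : ℝ) (x : Fin d → ℤ) : ℝ≥0∞ :=
  ENNReal.ofReal (M.H t x)

theorem even_error : (M.error t).Even := fun x =>
  congrArg ENNReal.ofReal (M.H_symm t x)

theorem hasExpDecay_error (ht : t ∈ M.subcritical) : HasExpDecay (M.error t) := by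
  obtain ⟨C, hC, c, hc, h⟩ := M.H_expDecay ht.1 ht.2
  exact ⟨C, hC, c, hc, fun x => ENNReal.ofReal_le_ofReal (h x)⟩

theorem ofReal_tsum_H (ht : t ∈ M.subcritical) :
    ENNReal.ofReal (∑' x, M.H t x) = ∑' x, M.error t x :=
  ENNReal.ofReal_tsum_of_nonneg (M.H_nonneg t)
    (summable_of_tsum_ofReal_ne_top (M.H_nonneg t) (hasExpDecay_error ht).tsum_ne_top)

theorem ofReal_tsum_sqNorm_mul_H (ht : t ∈ M.subcritical) :
    ENNReal.ofReal (∑' x, sqNorm x * M.H t x) = sqMoment (M.error t) := by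
  have hnonneg x : 0 ≤ sqNorm x * M.H t x := mul_nonneg (sqNorm_nonneg x) (M.H_nonneg t x)
  have h : ∑' x, ENNReal.ofReal (sqNorm x * M.H t x) = sqMoment (M.error t) :=
    tsum_congr fun x => ENNReal.ofReal_mul (sqNorm_nonneg x)
  rw [← h, ENNReal.ofReal_tsum_of_nonneg hnonneg (summable_of_tsum_ofReal_ne_top hnonneg ?_)]
  exact h ▸ (hasExpDecay_error ht).sqMoment_ne_top

/-- The convolution `G_s * f * G_t`, as on the right-hand sides of (I.1) and (I.2). -/
def sandwich (M : Model d c₀) (s : ℝ) (f : (Fin d → ℤ) → ℝ≥0∞) (t : ℝ) : (Fin d → ℤ) → ℝ≥0∞ :=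
  conv (M.G s) (conv f (M.G t))

theorem tsum_sandwich (f : (Fin d → ℤ) → ℝ≥0∞) :
    ∑' x, M.sandwich s f t x = M.chi s * M.chi t * ∑' x, f x := by
  rw [sandwich, tsum_conv, tsum_conv, chi, chi, mul_assoc, mul_comm (∑' x, f x)]

theorem sqMoment_sandwich {f : (Fin d → ℤ) → ℝ≥0∞} (hf : f.Even) :
    sqMoment (M.sandwich s f t) =
      (sqMoment (M.G s) * M.chi t + M.chi s * sqMoment (M.G t)) * ∑' x, f x +
        M.chi s * M.chi t * sqMoment f := by
  rw [sandwich, sqMoment_conv even_G, sqMoment_conv hf, tsum_conv, chi, chi]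
  ring

/-- The sum of `G_t` against the weight `w`; the weight `1` gives the susceptibility. -/
def weightedChi (M : Model d c₀) (w : (Fin d → ℤ) → ℝ≥0∞) (t : ℝ) : ℝ≥0∞ :=
  ∑' x, w x * M.G t x

theorem weightedChi_one : M.weightedChi 1 = M.chi := by
  ext t
  simp only [weightedChi, Pi.one_apply, one_mul, chi]

theorem weightedChi_mono (w : (Fin d → ℤ) → ℝ≥0∞) : MonotoneOn (M.weightedChi w) M.subcritical :=
  fun _ hs _ ht hst => ENNReal.tsum_le_tsum fun x =>
    mul_le_mul_right (M.mono x hs.1 hst ht.2.le) _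

theorem le_weightedChi (w : (Fin d → ℤ) → ℝ≥0∞) (ht : t ∈ M.subcritical) :
    w 0 ≤ M.weightedChi w t := by
  have h0 : (0 : ℝ) ∈ M.subcritical := ⟨le_rfl, by simpa using M.βc_pos⟩
  calc w 0 = w 0 * M.G 0 0 := by rw [M.init, if_pos rfl, mul_one]
    _ ≤ M.weightedChi w 0 := ENNReal.le_tsum 0
    _ ≤ M.weightedChi w t := weightedChi_mono w h0 ht ht.1

theorem weightedChi_le_add (w : (Fin d → ℤ) → ℝ≥0∞) (hs : s ∈ M.subcritical)
    (ht : t ∈ M.subcritical) (hst : s ≤ t) :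
    M.weightedChi w t ≤ M.weightedChi w s +
      ENNReal.ofReal (t - s) * ∑' x, w x * M.sandwich s M.kernel t x := by
  simp_rw [weightedChi, ← ENNReal.tsum_mul_left, ← ENNReal.tsum_add, mul_left_comm _ (w _),
    ← mul_add]
  refine ENNReal.tsum_le_tsum fun x => mul_le_mul_right ?_ _
  rw [sandwich, ← tsum_prod_eq_conv_conv]
  exact M.I1 hs.1 hst ht.2 x

/-- Since `J` has total mass `1`, summing this weight against `G_t` gives `∑ |x|² F_t(x)`, which is
`χ ξ²`; see `xiSq_eq`. -/
def stepWeight (M : Model d c₀) (x : Fin d → ℤ) : ℝ≥0∞ :=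
  ENNReal.ofReal (sqNorm x) + sqMoment M.kernel

theorem weightedChi_stepWeight :
    M.weightedChi M.stepWeight t = sqMoment (M.G t) + sqMoment M.kernel * M.chi t :=
  tsum_ofReal_sqNorm_add_mul _ _

theorem xiSq_eq : M.xiSq t = M.weightedChi M.stepWeight t / M.chi t := by
  have h : sqMoment (conv M.kernel (M.G t)) = M.weightedChi M.stepWeight t := by
    rw [sqMoment_conv even_kernel, tsum_kernel, weightedChi_stepWeight, chi, one_mul, add_comm]
  rw [← h]
  rfl

theorem tsum_stepWeight_mul_sandwich {f : (Fin d → ℤ) → ℝ≥0∞} (hf : f.Even) :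
    ∑' x, M.stepWeight x * M.sandwich s f t x =
      (sqMoment (M.G s) * M.chi t + M.chi s * M.weightedChi M.stepWeight t) * ∑' x, f x +
        M.chi s * M.chi t * sqMoment f := by
  simp_rw [stepWeight, tsum_ofReal_sqNorm_add_mul]
  rw [sqMoment_sandwich hf, tsum_sandwich, weightedChi_stepWeight]
  ring

theorem tsum_error_add_le_E (hβ : β ∈ M.subcritical) (ht : t ∈ Icc 0 β) :
    ∑' x, M.error t x + sqMoment (M.error t) / M.xiSq t ≤ M.E β := by
  have ht' := Icc_subset_subcritical hβ ht
  rw [← ofReal_tsum_H ht', ← ofReal_tsum_sqNorm_mul_H ht']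
  exact le_iSup₂_of_le (f := fun t (_ : t ∈ Icc 0 β) => ENNReal.ofReal (∑' x, M.H t x) +
    ENNReal.ofReal (∑' x, sqNorm x * M.H t x) / M.xiSq t) t ht le_rfl

/-- The weights `w` whose sum `∑ w(x) G_t(x)` grows, up to errors controlled by `E`, at logarithmic
rate `k χ(t)`. -/
structure IsGrowthWeight (M : Model d c₀) (w : (Fin d → ℤ) → ℝ≥0∞) (k : ℝ≥0) : Prop where
  rate_pos : 0 < k
  ne_zero : w 0 ≠ 0
  ne_top : ∀ ⦃t⦄, t ∈ M.subcritical → M.weightedChi w t ≠ ∞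
  two_mul_tsum_kernel : ∀ s t, 2 * ∑' x, w x * M.sandwich s M.kernel t x =
    k * (M.weightedChi w s * M.chi t + M.chi s * M.weightedChi w t)
  tsum_error_le : ∀ ⦃β t⦄, β ∈ M.subcritical → t ∈ Icc 0 β →
    ∑' x, w x * M.sandwich t (M.error t) t x ≤
      M.E β * ∑' x, w x * M.sandwich t M.kernel t x

theorem isGrowthWeight_one : M.IsGrowthWeight 1 1 where
  rate_pos := one_pos
  ne_zero := one_ne_zero
  ne_top t ht := by
    rw [weightedChi_one]
    exact chi_ne_top ht
  two_mul_tsum_kernel s t := by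
    simp only [Pi.one_apply, one_mul, tsum_sandwich, tsum_kernel, weightedChi_one, mul_one,
      ENNReal.coe_one, two_mul]
  tsum_error_le β t hβ ht := by
    simp only [Pi.one_apply, one_mul, tsum_sandwich, tsum_kernel, mul_one]
    rw [mul_comm]
    exact mul_le_mul_left (le_self_add.trans (tsum_error_add_le_E hβ ht)) _

theorem stepWeight_ne_zero (x : Fin d → ℤ) : M.stepWeight x ≠ 0 :=
  (one_pos.trans_le (one_le_sqMoment_kernel.trans le_add_self)).ne'

theorem weightedChi_stepWeight_ne_top (ht : t ∈ M.subcritical) :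
    M.weightedChi M.stepWeight t ≠ ∞ := by
  rw [weightedChi_stepWeight]
  exact ENNReal.add_ne_top.2
    ⟨sqMoment_G_ne_top ht, ENNReal.mul_ne_top sqMoment_kernel_ne_top (chi_ne_top ht)⟩

theorem tsum_stepWeight_mul_sandwich_kernel :
    ∑' x, M.stepWeight x * M.sandwich s M.kernel t x =
      M.weightedChi M.stepWeight s * M.chi t + M.chi s * M.weightedChi M.stepWeight t := by
  rw [tsum_stepWeight_mul_sandwich even_kernel, tsum_kernel, weightedChi_stepWeight,
    weightedChi_stepWeight]
  ring

theorem weightedChi_stepWeight_ne_zero (ht : t ∈ M.subcritical) :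
    M.weightedChi M.stepWeight t ≠ 0 :=
  ((pos_iff_ne_zero.2 (stepWeight_ne_zero 0)).trans_le (le_weightedChi _ ht)).ne'

theorem chi_mul_weightedChi_mul_div_xiSq (ht : t ∈ M.subcritical) (a : ℝ≥0∞) :
    M.chi t * M.weightedChi M.stepWeight t * (a / M.xiSq t) = M.chi t * M.chi t * a := by
  have hS0 := weightedChi_stepWeight_ne_zero ht
  rw [xiSq_eq, div_eq_mul_inv, ENNReal.inv_div (.inl (chi_ne_top ht)) (.inr hS0), div_eq_mul_inv]
  calc _ = M.chi t * M.chi t * a * (M.weightedChi M.stepWeight t *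
        (M.weightedChi M.stepWeight t)⁻¹) := by ring
    _ = _ := by rw [ENNReal.mul_inv_cancel hS0 (weightedChi_stepWeight_ne_top ht), mul_one]

theorem tsum_stepWeight_mul_sandwich_error_le (hβ : β ∈ M.subcritical) (ht : t ∈ Icc 0 β) :
    ∑' x, M.stepWeight x * M.sandwich t (M.error t) t x ≤
      M.E β * ∑' x, M.stepWeight x * M.sandwich t M.kernel t x := by
  have ht' := Icc_subset_subcritical hβ ht
  rw [tsum_stepWeight_mul_sandwich even_error, tsum_stepWeight_mul_sandwich_kernel]
  have hG : sqMoment (M.G t) ≤ M.weightedChi M.stepWeight t :=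
    le_self_add.trans_eq weightedChi_stepWeight.symm
  calc _ ≤ (M.weightedChi M.stepWeight t * M.chi t + M.chi t * M.weightedChi M.stepWeight t) *
        ∑' x, M.error t x + M.chi t * M.chi t * sqMoment (M.error t) := by gcongr
    _ ≤ (M.weightedChi M.stepWeight t * M.chi t + M.chi t * M.weightedChi M.stepWeight t) *
        (∑' x, M.error t x + sqMoment (M.error t) / M.xiSq t) := by
      rw [← chi_mul_weightedChi_mul_div_xiSq ht', mul_add]
      gcongr
      exact le_add_self
    _ ≤ M.E β * _ := by
      rw [mul_comm]
      exact mul_le_mul_left (tsum_error_add_le_E hβ ht) _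

theorem isGrowthWeight_stepWeight : M.IsGrowthWeight M.stepWeight 2 where
  rate_pos := two_pos
  ne_zero := stepWeight_ne_zero 0
  ne_top _ := weightedChi_stepWeight_ne_top
  two_mul_tsum_kernel s t := by rw [tsum_stepWeight_mul_sandwich_kernel, ENNReal.coe_ofNat]
  tsum_error_le _ _ := tsum_stepWeight_mul_sandwich_error_le

theorem toReal_sandwich_sub_le_deriv (ht : t ∈ M.subcritical) (x : Fin d → ℤ) :
    (M.sandwich t M.kernel t x).toReal - (M.sandwich t (M.error t) t x).toReal ≤ M.G' t x := by
  have hfinite {f : (Fin d → ℤ) → ℝ≥0∞} (hf : ∑' x, f x ≠ ∞) : ∑' p : (Fin d → ℤ) × (Fin d → ℤ),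
      M.G t p.1 * f p.2 * M.G t (x - p.1 - p.2) ≠ ∞ := by
    have h : ∑' y, M.sandwich t f t y ≠ ∞ := by
      rw [tsum_sandwich]
      exact ENNReal.mul_ne_top (ENNReal.mul_ne_top (chi_ne_top ht) (chi_ne_top ht)) hf
    rw [tsum_prod_eq_conv_conv]
    exact ENNReal.ne_top_of_tsum_ne_top h x
  have hJ := hfinite ((tsum_kernel (M := M)).trans_ne ENNReal.one_ne_top)
  have hH := hfinite (hasExpDecay_error ht).tsum_ne_top
  rw [sandwich, sandwich, ← tsum_prod_eq_conv_conv, ← tsum_prod_eq_conv_conv,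
    ENNReal.tsum_toReal_eq (ENNReal.ne_top_of_tsum_ne_top hJ),
    ENNReal.tsum_toReal_eq (ENNReal.ne_top_of_tsum_ne_top hH),
    ← (ENNReal.summable_toReal hJ).tsum_sub (ENNReal.summable_toReal hH)]
  refine (tsum_congr fun p => ?_).trans_le (M.I2 ht.1 ht.2 x)
  simp only [kernel, error, ENNReal.toReal_mul, ENNReal.toReal_ofReal (M.K.nonneg _),
    ENNReal.toReal_ofReal (M.H_nonneg _ _)]
  ring

theorem sum_sub_sum_le_weightedChi_sub {w : (Fin d → ℤ) → ℝ≥0∞} (hs : s ∈ M.subcritical)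
    (ht : t ∈ M.subcritical) (hst : s ≤ t) (hw : M.weightedChi w t ≠ ∞) (A : Finset (Fin d → ℤ)) :
    ∑ x ∈ A, (w x).toReal * (M.G t x).toReal - ∑ x ∈ A, (w x).toReal * (M.G s x).toReal ≤
      (M.weightedChi w t).toReal - (M.weightedChi w s).toReal := by
  have hle x : w x * M.G s x ≤ w x * M.G t x := mul_le_mul_right (M.mono x hs.1 hst ht.2.le) _
  have hw' : M.weightedChi w s ≠ ∞ := ne_top_of_le_ne_top hw (ENNReal.tsum_le_tsum hle)
  have hsum := (ENNReal.summable_toReal hw).sub (ENNReal.summable_toReal hw')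
  rw [weightedChi, weightedChi, ENNReal.tsum_toReal_eq (ENNReal.ne_top_of_tsum_ne_top hw),
    ENNReal.tsum_toReal_eq (ENNReal.ne_top_of_tsum_ne_top hw'),
    ← (ENNReal.summable_toReal hw).tsum_sub (ENNReal.summable_toReal hw'),
    ← Finset.sum_sub_distrib]
  simp_rw [← ENNReal.toReal_mul]
  exact hsum.sum_le_tsum A fun x _ => sub_nonneg.2
    (ENNReal.toReal_mono (ENNReal.ne_top_of_tsum_ne_top hw x) (hle x))

/-- The derivative of a finite partial sum is controlled termwise by (I.2), and the increments of
`∑ w G` dominate those of the partial sum. -/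
theorem rightDiniGE_weightedChi {w : (Fin d → ℤ) → ℝ≥0∞} (ht : t ∈ M.subcritical)
    (hw : ∀ s ∈ M.subcritical, M.weightedChi w s ≠ ∞)
    (hJ : ∑' x, w x * M.sandwich t M.kernel t x ≠ ∞)
    (hH : ∑' x, w x * M.sandwich t (M.error t) t x ≠ ∞) :
    RightDiniGE (fun s => (M.weightedChi w s).toReal)
      ((∑' x, w x * M.sandwich t M.kernel t x).toReal -
        (∑' x, w x * M.sandwich t (M.error t) t x).toReal) t := by
  intro r hr
  have hsum := (ENNReal.summable_toReal hJ).hasSum.sub (ENNReal.summable_toReal hH).hasSum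
  rw [← ENNReal.tsum_toReal_eq (ENNReal.ne_top_of_tsum_ne_top hJ),
    ← ENNReal.tsum_toReal_eq (ENNReal.ne_top_of_tsum_ne_top hH)] at hsum
  obtain ⟨A, hA⟩ := (hsum.eventually_const_lt hr).exists
  have hderiv : HasDerivWithinAt (fun s => ∑ x ∈ A, (w x).toReal * (M.G s x).toReal)
      (∑ x ∈ A, (w x).toReal * M.G' t x) (Ioi t) t :=
    HasDerivWithinAt.fun_sum fun x _ => ((M.deriv x ht.1 ht.2).mono
      (Ioi_subset_Ici_self.trans (Ici_subset_Ici.2 ht.1))).const_mul _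
  have hlt : r < ∑ x ∈ A, (w x).toReal * M.G' t x := by
    refine hA.trans_le (Finset.sum_le_sum fun x _ => ?_)
    rw [ENNReal.toReal_mul, ENNReal.toReal_mul, ← mul_sub]
    exact mul_le_mul_of_nonneg_left (toReal_sandwich_sub_le_deriv ht x) ENNReal.toReal_nonneg
  refine (RightDiniGE.of_hasDerivWithinAt hderiv).of_eventually_sub_le_sub ?_ r hlt
  filter_upwards [eventually_mem_subcritical ht, self_mem_nhdsWithin] with s hs hts
  exact sum_sub_sum_le_weightedChi_sub ht hs (le_of_lt hts) (hw s hs) A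

/-- The increment between `s` and `t` of the logarithm of `∑ w G`. -/
def logIncrement (M : Model d c₀) (w : (Fin d → ℤ) → ℝ≥0∞) (s t : ℝ) : ℝ :=
  Real.log (M.weightedChi w t).toReal - Real.log (M.weightedChi w s).toReal

namespace IsGrowthWeight

variable {w : (Fin d → ℤ) → ℝ≥0∞} {k : ℝ≥0}

theorem toReal_weightedChi_pos (hw : M.IsGrowthWeight w k) (ht : t ∈ M.subcritical) :
    0 < (M.weightedChi w t).toReal :=
  ENNReal.toReal_pos ((pos_iff_ne_zero.2 hw.ne_zero).trans_le (le_weightedChi w ht)).ne'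
    (hw.ne_top ht)

theorem toReal_weightedChi_mono (hw : M.IsGrowthWeight w k) :
    MonotoneOn (fun t => (M.weightedChi w t).toReal) M.subcritical := fun _ hs _ ht hst =>
  ENNReal.toReal_mono (hw.ne_top ht) (weightedChi_mono w hs ht hst)

theorem tsum_kernel_ne_top (hw : M.IsGrowthWeight w k) (hs : s ∈ M.subcritical)
    (ht : t ∈ M.subcritical) : ∑' x, w x * M.sandwich s M.kernel t x ≠ ∞ := by
  have h : 2 * ∑' x, w x * M.sandwich s M.kernel t x ≠ ∞ := by
    rw [hw.two_mul_tsum_kernel]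
    exact ENNReal.mul_ne_top ENNReal.coe_ne_top (ENNReal.add_ne_top.2
      ⟨ENNReal.mul_ne_top (hw.ne_top hs) (chi_ne_top ht),
        ENNReal.mul_ne_top (chi_ne_top hs) (hw.ne_top ht)⟩)
  exact ne_top_of_le_ne_top h (le_mul_of_one_le_left' one_le_two)

theorem toReal_tsum_kernel (hw : M.IsGrowthWeight w k) (hs : s ∈ M.subcritical)
    (ht : t ∈ M.subcritical) : (∑' x, w x * M.sandwich s M.kernel t x).toReal =
      k / 2 * ((M.weightedChi w s).toReal * (M.chi t).toReal +
        (M.chi s).toReal * (M.weightedChi w t).toReal) := by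
  have h := congrArg ENNReal.toReal (hw.two_mul_tsum_kernel s t)
  rw [ENNReal.toReal_mul, ENNReal.toReal_mul, ENNReal.toReal_add
    (ENNReal.mul_ne_top (hw.ne_top hs) (chi_ne_top ht))
    (ENNReal.mul_ne_top (chi_ne_top hs) (hw.ne_top ht)), ENNReal.toReal_mul, ENNReal.toReal_mul,
    ENNReal.toReal_ofNat, ENNReal.coe_toReal] at h
  linarith

theorem sub_le (hw : M.IsGrowthWeight w k) (hs : s ∈ M.subcritical) (ht : t ∈ M.subcritical)
    (hst : s ≤ t) : (M.weightedChi w t).toReal - (M.weightedChi w s).toReal ≤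
      (t - s) * (k / 2 * ((M.weightedChi w s).toReal * (M.chi t).toReal +
        (M.chi s).toReal * (M.weightedChi w t).toReal)) := by
  rw [sub_le_iff_le_add', ← hw.toReal_tsum_kernel hs ht, ← ENNReal.toReal_ofReal (sub_nonneg.2 hst),
    ← ENNReal.toReal_mul]
  exact ENNReal.toReal_le_add (weightedChi_le_add w hs ht hst) (hw.ne_top hs)
    (ENNReal.mul_ne_top ENNReal.ofReal_ne_top (hw.tsum_kernel_ne_top hs ht))

theorem continuousOn (hw : M.IsGrowthWeight w k) (hβ : β ∈ M.subcritical) :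
    ContinuousOn (fun t => (M.weightedChi w t).toReal) (Icc 0 β) := by
  have hsub := Icc_subset_subcritical hβ
  have hchi : MonotoneOn (fun t => (M.chi t).toReal) M.subcritical := by
    simpa only [weightedChi_one] using isGrowthWeight_one.toReal_weightedChi_mono
  refine continuousOn_of_monotoneOn_of_sub_le_mul (hw.toReal_weightedChi_mono.mono hsub)
    (L := k / 2 * ((M.weightedChi w β).toReal * (M.chi β).toReal +
      (M.chi β).toReal * (M.weightedChi w β).toReal)) fun s hs t ht hst => ?_
  refine (hw.sub_le (hsub hs) (hsub ht) hst).trans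
    (mul_le_mul_of_nonneg_left ?_ (sub_nonneg.2 hst))
  have hw_le {u} (hu : u ∈ Icc 0 β) := hw.toReal_weightedChi_mono (hsub hu) hβ hu.2
  have hchi_le {u} (hu : u ∈ Icc 0 β) := hchi (hsub hu) hβ hu.2
  gcongr _ * (?_ * ?_ + ?_ * ?_)
  exacts [hw_le hs, hchi_le ht, hchi_le hs, hw_le ht]

theorem continuousWithinAt (hw : M.IsGrowthWeight w k) (hβ : β ∈ M.subcritical)
    (ht : t ∈ Ico 0 β) : ContinuousWithinAt (fun s => (M.weightedChi w s).toReal) (Ioi t) t :=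
  (hw.continuousOn hβ t (Ico_subset_Icc_self ht)).mono_of_mem_nhdsWithin
    (Icc_mem_nhdsGT_of_mem ht)

theorem rightDiniGE_neg (hw : M.IsGrowthWeight w k) (hβ : β ∈ M.subcritical) (ht : t ∈ Ico 0 β) :
    RightDiniGE (fun s => -(M.weightedChi w s).toReal)
      (-(k * (M.chi t).toReal * (M.weightedChi w t).toReal)) t := by
  have ht' := Icc_subset_subcritical hβ (Ico_subset_Icc_self ht)
  have hφ := (hw.continuousWithinAt hβ ht).tendsto
  have hchi := (isGrowthWeight_one.continuousWithinAt hβ ht).tendsto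
  rw [weightedChi_one] at hchi
  refine RightDiniGE.of_eventually_mul_le (q := fun s => -(k / 2 *
    ((M.weightedChi w t).toReal * (M.chi s).toReal +
      (M.chi t).toReal * (M.weightedChi w s).toReal))) ?_ ?_
  · convert (((hchi.const_mul _).add (hφ.const_mul _)).const_mul _).neg using 2
    ring
  · filter_upwards [eventually_mem_subcritical ht', self_mem_nhdsWithin] with s hs hts
    linarith [hw.sub_le ht' hs (le_of_lt hts)]

theorem rightDiniGE (hw : M.IsGrowthWeight w k) (hβ : β ∈ M.subcritical) (hE : M.E β ≠ ∞)
    (ht : t ∈ Icc 0 β) : RightDiniGE (fun s => (M.weightedChi w s).toReal)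
      ((1 - (M.E β).toReal) * (k * (M.chi t).toReal * (M.weightedChi w t).toReal)) t := by
  have ht' := Icc_subset_subcritical hβ ht
  have hJ := hw.tsum_kernel_ne_top ht' ht'
  have hH := ne_top_of_le_ne_top (ENNReal.mul_ne_top hE hJ) (hw.tsum_error_le hβ ht)
  refine (rightDiniGE_weightedChi ht' hw.ne_top hJ hH).mono ?_
  have herror := ENNReal.toReal_mono (ENNReal.mul_ne_top hE hJ) (hw.tsum_error_le hβ ht)
  rw [ENNReal.toReal_mul] at herror
  have hkernel := hw.toReal_tsum_kernel ht' ht'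
  calc _ = (1 - (M.E β).toReal) * (∑' x, w x * M.sandwich t M.kernel t x).toReal := by
        rw [hkernel]
        ring
    _ ≤ _ := by linarith

theorem rightDiniGE_log (hw : M.IsGrowthWeight w k) (hβ : β ∈ M.subcritical) (hE : M.E β ≠ ∞)
    (ht : t ∈ Ico 0 β) : RightDiniGE (fun s => Real.log (M.weightedChi w s).toReal)
      ((1 - (M.E β).toReal) * k * (M.chi t).toReal) t := by
  have ht' := Ico_subset_Icc_self ht
  have hpos := hw.toReal_weightedChi_pos (Icc_subset_subcritical hβ ht')
  convert (hw.rightDiniGE hβ hE ht').log (hw.continuousWithinAt hβ ht) hpos using 1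
  field_simp

theorem rightDiniGE_neg_log (hw : M.IsGrowthWeight w k) (hβ : β ∈ M.subcritical)
    (ht : t ∈ Ico 0 β) : RightDiniGE (fun s => -Real.log (M.weightedChi w s).toReal)
      (-(k * (M.chi t).toReal)) t := by
  have hpos := hw.toReal_weightedChi_pos (Icc_subset_subcritical hβ (Ico_subset_Icc_self ht))
  convert (hw.rightDiniGE_neg hβ ht).neg_log (hw.continuousWithinAt hβ ht) hpos using 2
  field_simp

theorem continuousOn_log (hw : M.IsGrowthWeight w k) (hβ : β ∈ M.subcritical) :
    ContinuousOn (fun t => Real.log (M.weightedChi w t).toReal) (Icc 0 β) :=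
  (hw.continuousOn hβ).log fun _ ht =>
    (hw.toReal_weightedChi_pos (Icc_subset_subcritical hβ ht)).ne'

theorem logIncrement_nonneg (hw : M.IsGrowthWeight w k) (hβ : β ∈ M.subcritical)
    (hs : s ∈ Icc 0 β) : 0 ≤ M.logIncrement w s β :=
  have hs' := Icc_subset_subcritical hβ hs
  sub_nonneg.2 (Real.log_le_log (hw.toReal_weightedChi_pos hs')
    (hw.toReal_weightedChi_mono hs' hβ hs.2))

theorem mul_logIncrement_le {v : (Fin d → ℤ) → ℝ≥0∞} {l : ℝ≥0} (hw : M.IsGrowthWeight w k)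
    (hv : M.IsGrowthWeight v l) (hβ : β ∈ M.subcritical) (hE : M.E β < 1) (hs : s ∈ Icc 0 β) :
    (1 - (M.E β).toReal) * k * M.logIncrement v s β ≤ l * M.logIncrement w s β := by
  have hE' : 0 < 1 - (M.E β).toReal :=
    sub_pos.2 (ENNReal.toReal_lt_of_lt_ofReal (by simpa only [ENNReal.ofReal_one] using hE))
  have hsub : Icc s β ⊆ Icc 0 β := Icc_subset_Icc_left hs.1
  have hsub' : Ico s β ⊆ Ico 0 β := Ico_subset_Ico_left hs.1
  exact mul_sub_le_mul_sub_of_rightDiniGE (m := fun t => (M.chi t).toReal) hs.2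
    (mul_pos hE' hw.rate_pos) hv.rate_pos ((hw.continuousOn_log hβ).mono hsub)
    ((hv.continuousOn_log hβ).mono hsub) (fun t ht => hw.rightDiniGE_log hβ hE.ne_top (hsub' ht))
    fun t ht => hv.rightDiniGE_neg_log hβ (hsub' ht)

theorem exp_neg_logIncrement (hw : M.IsGrowthWeight w k) (hs : s ∈ M.subcritical)
    (ht : t ∈ M.subcritical) : Real.exp (-M.logIncrement w s t) =
      (M.weightedChi w s).toReal / (M.weightedChi w t).toReal := by
  rw [logIncrement, neg_sub, Real.exp_sub, Real.exp_log (hw.toReal_weightedChi_pos hs),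
    Real.exp_log (hw.toReal_weightedChi_pos ht)]

end IsGrowthWeight

theorem chi_div_chi (hs : s ∈ M.subcritical) (ht : t ∈ M.subcritical) :
    M.chi s / M.chi t = ENNReal.ofReal (Real.exp (-M.logIncrement 1 s t)) := by
  have hpos := isGrowthWeight_one.toReal_weightedChi_pos ht
  rw [isGrowthWeight_one.exp_neg_logIncrement hs ht, ENNReal.ofReal_div_of_pos hpos,
    weightedChi_one, ENNReal.ofReal_toReal (chi_ne_top hs), ENNReal.ofReal_toReal (chi_ne_top ht)]

theorem xi_sq : M.xi t ^ 2 = (M.weightedChi M.stepWeight t).toReal / (M.chi t).toReal := by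
  rw [xi, Real.sq_sqrt ENNReal.toReal_nonneg, xiSq_eq, ENNReal.toReal_div]

theorem xi_div_xi_sq (hs : s ∈ M.subcritical) (ht : t ∈ M.subcritical) :
    (M.xi s / M.xi t) ^ 2 =
      Real.exp (-(M.logIncrement M.stepWeight s t - M.logIncrement 1 s t)) := by
  rw [neg_sub', Real.exp_sub, isGrowthWeight_one.exp_neg_logIncrement hs ht,
    isGrowthWeight_stepWeight.exp_neg_logIncrement hs ht, weightedChi_one, div_pow, xi_sq, xi_sq,
    div_div_div_comm]

end Model

end Blackbox

theorem statement14_general {d : ℕ} {c₀ : ℝ} (M : Model d c₀) {β' β : ℝ} (hβ'0 : 0 ≤ β')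
    (hβ'β : β' ≤ β) (hβ : ENNReal.ofReal β < M.βc)
    (hE1 : M.E β ≤ max (M.chi β' / M.chi β / 4)
      (ENNReal.ofReal ((M.xi β' / M.xi β) ^ 2) / 4))
    (hE2 : M.E β ≤ 1 / 2) :
    M.chi β' / M.chi β / 2 ≤ ENNReal.ofReal ((M.xi β' / M.xi β) ^ 2) ∧
      ENNReal.ofReal ((M.xi β' / M.xi β) ^ 2) ≤ 2 * (M.chi β' / M.chi β) := by
  have hsub : β ∈ M.subcritical := ⟨hβ'0.trans hβ'β, hβ⟩
  have hmem : β' ∈ Set.Icc 0 β := ⟨hβ'0, hβ'β⟩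
  have hsub' := Model.Icc_subset_subcritical hsub hmem
  have hE : M.E β < 1 := hE2.trans_lt (by norm_num)
  have hE2' : (M.E β).toReal ≤ 1 / 2 := by simpa using ENNReal.toReal_mono (by norm_num) hE2
  have hlower := Model.isGrowthWeight_stepWeight.mul_logIncrement_le Model.isGrowthWeight_one
    hsub hE hmem
  have hupper := Model.isGrowthWeight_one.mul_logIncrement_le Model.isGrowthWeight_stepWeight
    hsub hE hmem
  push_cast at hlower hupper
  rw [Model.chi_div_chi hsub' hsub, Model.xi_div_xi_sq hsub' hsub] at hE1 ⊢
  obtain ⟨hle, hge⟩ := abs_le.1 <| abs_sub_le_log_two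
    (Model.isGrowthWeight_one.logIncrement_nonneg hsub hmem) ENNReal.toReal_nonneg hE2'
    (by linarith) (by linarith) (toReal_le_max_of_le_max (Real.exp_nonneg _) hE1)
  exact ⟨ENNReal.div_le_of_le_mul' (ofReal_exp_neg_le_two_mul (by linarith)),
    ofReal_exp_neg_le_two_mul hge⟩

/-- comparability of `χ` and `ξ²` ratios when `E` is small
(`cor: comparison chi xi when E small`). -/
theorem statement14 (d : ℕ) (hd : 2 < d) (c₀ : ℝ) (hc₀ : c₀ ∈ Set.Ioc (0:ℝ) 1)
    (M : Model d c₀) (β' β : ℝ) (hβ'0 : 0 ≤ β') (hβ'β : β' ≤ β)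
    (hβ : ENNReal.ofReal β < M.βc)
    (hE1 : M.E β ≤ max (M.chi β' / M.chi β / 4)
      (ENNReal.ofReal ((M.xi β' / M.xi β) ^ 2) / 4))
    (hE2 : M.E β ≤ 1/2) :
    M.chi β' / M.chi β / 2 ≤ ENNReal.ofReal ((M.xi β' / M.xi β) ^ 2) ∧
      ENNReal.ofReal ((M.xi β' / M.xi β) ^ 2) ≤ 2 * (M.chi β' / M.chi β) :=
  statement14_general M hβ'0 hβ'β hβ hE1 hE2
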